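/- Let K be a number field with ring of integers O_K. There exists a unit u in O_K^* such that K = ℚ(u^k) for every positive integer k, if and only if K is not a CM field. -/

import Mathlib

open NumberField

/-!
If every unit `u` has a power generating a proper subfield, then `𝓞_K^*` is the union, over the
finitely many proper subfields `F`, of the subgroups of units having a positive power in `F`. By
B. H. Neumann's covering lemma one of these subgroups has finite index, hence is everything.

Two infinite places `w₁ ≠ w₂` are separated by a unit with `w₂ u < 1 < w₁ u` and by all its positive
powers, so the places of `K` are determined by their restrictions to such an `F`. Only one place
then lies over each place `v` of `F`, and counting embeddings over `v` gives `[K : F] ≤ 2`, with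
equality exactly when a complex place lies over a real one: `K` is CM.

Conversely, in a CM field every unit has a power in `K⁺`, since `u / conj u` is a root of unity.
-/

section Isolator

variable {G : Type*} [CommGroup G]

/-- The isolator of a subgroup `H` of a commutative group: the elements with a positive power in
`H`, obtained as the preimage of the torsion of `G ⧸ H`. -/
def isolator (H : Subgroup G) : Subgroup G :=
  (CommGroup.torsion (G ⧸ H)).comap (QuotientGroup.mk' H)

theorem mem_isolator_iff {H : Subgroup G} {g : G} :
    g ∈ isolator H ↔ ∃ k : ℕ, 0 < k ∧ g ^ k ∈ H := by
  simp only [isolator, Subgroup.mem_comap, CommGroup.mem_torsion, isOfFinOrder_iff_pow_eq_one,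
    QuotientGroup.mk'_apply, ← QuotientGroup.mk_pow, QuotientGroup.eq_one_iff]

theorem isolator_eq_top_iff {H : Subgroup G} :
    isolator H = ⊤ ↔ ∀ g : G, ∃ k : ℕ, 0 < k ∧ g ^ k ∈ H := by
  simp only [Subgroup.eq_top_iff', mem_isolator_iff]

theorem isolator_eq_top_of_finiteIndex (H : Subgroup G) [(isolator H).FiniteIndex] :
    isolator H = ⊤ := by
  refine isolator_eq_top_iff.2 fun g ↦ ?_
  obtain ⟨k, hk, hg⟩ := mem_isolator_iff.1 ((isolator H).pow_index_mem g)
  exact ⟨(isolator H).index * k, mul_pos (Nat.pos_of_ne_zero Subgroup.FiniteIndex.index_ne_zero) hk,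
    by rwa [pow_mul]⟩

open scoped Pointwise in
theorem exists_isolator_eq_top_of_forall_exists_mem {ι : Type*} [Finite ι] (H : ι → Subgroup G)
    (h : ∀ g, ∃ i, g ∈ isolator (H i)) : ∃ i, isolator (H i) = ⊤ := by
  have := Fintype.ofFinite ι
  have hcover : ⋃ i ∈ Finset.univ, (1 : G) • (isolator (H i) : Set G) = Set.univ := by
    simpa [Set.eq_univ_iff_forall] using h
  obtain ⟨i, -, _⟩ := Subgroup.exists_finiteIndex_of_leftCoset_cover hcover
  exact ⟨i, isolator_eq_top_of_finiteIndex (H i)⟩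

end Isolator

section UnitsInSubfield

variable {K : Type*} [Field K]

/-- The group `𝓞_K^* ∩ F` of units of `𝓞 K` lying in a subfield `F` of `K`. -/
def unitsInSubfield (F : Subfield K) : Subgroup (𝓞 K)ˣ :=
  F.toSubmonoid.units.comap (Units.map (algebraMap (𝓞 K) K : 𝓞 K →* K))

theorem mem_unitsInSubfield_iff {F : Subfield K} {u : (𝓞 K)ˣ} :
    u ∈ unitsInSubfield F ↔ algebraMap (𝓞 K) K u ∈ F := by
  simp [unitsInSubfield, Submonoid.mem_units_iff]

theorem mem_isolator_unitsInSubfield_iff {F : Subfield K} {u : (𝓞 K)ˣ} :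
    u ∈ isolator (unitsInSubfield F) ↔
      ∃ k : ℕ, 0 < k ∧ algebraMap (𝓞 K) K ((u : 𝓞 K) ^ k) ∈ F := by
  simp only [mem_isolator_iff, mem_unitsInSubfield_iff, Units.val_pow_eq_pow_val]

variable (K) in
theorem finite_subfield [NumberField K] : Finite (Subfield K) := by
  have : Finite (IntermediateField ℚ K) :=
    Field.finite_intermediateField_of_exists_primitive_element ℚ K
      (Field.exists_primitive_element ℚ K)
  refine Finite.of_surjective (IntermediateField.toSubfield : IntermediateField ℚ K → _) fun F ↦ ?_
  exact ⟨F.toIntermediateField fun q ↦ by simp, rfl⟩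

theorem exists_unit_forall_pow_closure_eq_top_iff [NumberField K] :
    (∃ u : (𝓞 K)ˣ, ∀ k : ℕ, 0 < k →
        Subfield.closure {algebraMap (𝓞 K) K ((u : 𝓞 K) ^ k)} = (⊤ : Subfield K)) ↔
      ∀ F : Subfield K, F ≠ ⊤ → isolator (unitsInSubfield F) ≠ ⊤ := by
  constructor
  · rintro ⟨u, hu⟩ F hF htop
    obtain ⟨k, hk, hmem⟩ := mem_isolator_unitsInSubfield_iff.1 (htop ▸ Subgroup.mem_top u)
    exact hF (top_le_iff.1 (hu k hk ▸ Subfield.closure_le.2 (Set.singleton_subset_iff.2 hmem)))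
  · contrapose!
    intro h
    have := finite_subfield K
    obtain ⟨⟨F, hF⟩, htop⟩ := exists_isolator_eq_top_of_forall_exists_mem
      (fun F : {F : Subfield K // F ≠ ⊤} ↦ unitsInSubfield F.1) fun u ↦ by
        obtain ⟨k, hk, hne⟩ := h u
        exact ⟨⟨_, hne⟩, mem_isolator_unitsInSubfield_iff.2
          ⟨k, hk, Subfield.subset_closure (Set.mem_singleton _)⟩⟩
    exact ⟨F, hF, htop⟩

end UnitsInSubfield

section InfinitePlaces

variable {F K : Type*} [Field F] [Field K] [Algebra F K]

theorem placesOver_comap_eq_singleton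
    (hinj : Function.Injective fun w : InfinitePlace K ↦ w.comap (algebraMap F K))
    (w : InfinitePlace K) : (w.comap (algebraMap F K)).placesOver K = {w} := by
  ext w'
  refine ⟨fun hw' ↦ ?_, ?_⟩
  · have : w'.LiesOver (w.comap (algebraMap F K)) := hw'
    exact hinj (InfinitePlace.LiesOver.comap_eq w' _)
  · rintro rfl
    exact ⟨rfl⟩

variable [NumberField K]

theorem exists_unit_lt_one_and_one_lt {w₁ w₂ : InfinitePlace K} (hne : w₁ ≠ w₂) :
    ∃ u : (𝓞 K)ˣ, w₂ (algebraMap (𝓞 K) K u) < 1 ∧ 1 < w₁ (algebraMap (𝓞 K) K u) := by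
  obtain ⟨u, hu⟩ := Units.dirichletUnitTheorem.exists_unit K w₁
  have hlog₁ : 0 < Real.log (w₁ (algebraMap (𝓞 K) K u)) := by
    by_contra! hle
    have hterm (w : InfinitePlace K) : w.mult * Real.log (w (algebraMap (𝓞 K) K u)) ≤ 0 := by
      refine mul_nonpos_of_nonneg_of_nonpos w.mult.cast_nonneg ?_
      obtain rfl | hw := eq_or_ne w w₁
      exacts [hle, (hu w hw).le]
    have hterm₂ : w₂.mult * Real.log (w₂ (algebraMap (𝓞 K) K u)) < 0 :=
      mul_neg_of_pos_of_neg (Nat.cast_pos.2 InfinitePlace.mult_pos) (hu w₂ hne.symm)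
    exact (Finset.sum_neg' (fun w _ ↦ hterm w) ⟨w₂, Finset.mem_univ _, hterm₂⟩).ne
      (Units.sum_mult_mul_log u)
  exact ⟨u, (Real.log_neg_iff (Units.pos_at_place u w₂)).1 (hu w₂ hne.symm),
    (Real.log_pos_iff (Units.pos_at_place u w₁).le).1 hlog₁⟩

theorem comap_injective_of_isolator_unitsInSubfield_eq_top {F : Subfield K}
    (hF : isolator (unitsInSubfield F) = ⊤) :
    Function.Injective fun w : InfinitePlace K ↦ w.comap (algebraMap F K) := by
  intro w₁ w₂ (hw : w₁.comap (algebraMap F K) = w₂.comap (algebraMap F K))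
  by_contra hne
  obtain ⟨u, hlt, hgt⟩ := exists_unit_lt_one_and_one_lt hne
  obtain ⟨k, hk, hmem⟩ := mem_isolator_unitsInSubfield_iff.1 (hF ▸ Subgroup.mem_top u)
  have hpow : w₁ (algebraMap (𝓞 K) K ((u : 𝓞 K) ^ k)) = w₂ (algebraMap (𝓞 K) K ((u : 𝓞 K) ^ k)) :=
    congr($hw ⟨_, hmem⟩)
  rw [map_pow, map_pow, map_pow] at hpow
  exact (hpow ▸ one_lt_pow₀ hgt hk.ne').not_gt (pow_lt_one₀ (apply_nonneg _ _) hlt hk.ne')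

variable [NumberField F]

open InfinitePlace in
theorem finrank_eq_one_of_isUnramified_of_placesOver_eq_singleton {v : InfinitePlace F}
    {w : InfinitePlace K} (hv : placesOver K v = {w}) (hw : w.IsUnramified F) :
    Module.finrank F K = 1 := by
  have hmem (w' : InfinitePlace K) : w'.LiesOver v ↔ w' = w := Set.ext_iff.1 hv w'
  have hunram : unramifiedPlacesOver K v = {w} := by grind [unramifiedPlacesOver]
  have hram : ramifiedPlacesOver K v = ∅ := by grind [ramifiedPlacesOver]
  rw [← unramifedPlacesOver_ncard_add_eq_finrank K v, hunram, hram, Set.ncard_singleton,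
    Set.ncard_empty]

open InfinitePlace in
theorem finrank_eq_two_of_isRamified_of_placesOver_eq_singleton {v : InfinitePlace F}
    {w : InfinitePlace K} (hv : placesOver K v = {w}) (hw : w.IsRamified F) :
    Module.finrank F K = 2 := by
  have hmem (w' : InfinitePlace K) : w'.LiesOver v ↔ w' = w := Set.ext_iff.1 hv w'
  have hunram : unramifiedPlacesOver K v = ∅ := by grind [unramifiedPlacesOver]
  have hram : ramifiedPlacesOver K v = {w} := by grind [ramifiedPlacesOver]
  rw [← unramifedPlacesOver_ncard_add_eq_finrank K v, hunram, hram, Set.ncard_singleton,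
    Set.ncard_empty]

variable (F) in
theorem isCMField_of_comap_injective (hFK : Module.finrank F K ≠ 1)
    (hinj : Function.Injective fun w : InfinitePlace K ↦ w.comap (algebraMap F K)) :
    IsCMField K := by
  have hram (w : InfinitePlace K) : w.IsRamified F := fun hw ↦
    hFK (finrank_eq_one_of_isUnramified_of_placesOver_eq_singleton
      (placesOver_comap_eq_singleton hinj w) hw)
  have : IsTotallyComplex K := ⟨fun w ↦ (hram w).isComplex⟩
  have : IsTotallyReal F := ⟨fun v ↦ by
    obtain ⟨w, rfl⟩ := InfinitePlace.comap_surjective (K := K) v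
    exact (hram w).isReal⟩
  obtain ⟨w⟩ : Nonempty (InfinitePlace K) := inferInstance
  have : Algebra.IsQuadraticExtension F K :=
    ⟨finrank_eq_two_of_isRamified_of_placesOver_eq_singleton
      (placesOver_comap_eq_singleton hinj w) (hram w)⟩
  exact IsCMField.ofCMExtension F K

end InfinitePlaces

section CMField

variable {K : Type*} [Field K]

theorem finrank_subfield_eq_one_iff {F : Subfield K} : Module.finrank F K = 1 ↔ F = ⊤ := by
  rw [← Subfield.relfinrank_top_right, Subfield.relfinrank_eq_one_iff, top_le_iff]

theorem isTotallyReal_iff_forall_isReal :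
    IsTotallyReal K ↔ ∀ φ : K →+* ℂ, ComplexEmbedding.IsReal φ :=
  ⟨fun _ ↦ IsTotallyReal.complexEmbedding_isReal,
    fun h ↦ ⟨fun v ↦ InfinitePlace.isReal_iff.2 (h v.embedding)⟩⟩

theorem isTotallyComplex_iff_forall_not_isReal :
    IsTotallyComplex K ↔ ∀ φ : K →+* ℂ, ¬ ComplexEmbedding.IsReal φ :=
  ⟨fun _ ↦ IsTotallyComplex.complexEmbedding_not_isReal,
    fun h ↦ ⟨fun v ↦ InfinitePlace.isComplex_iff.2 (h v.embedding)⟩⟩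

theorem isCMField_iff_exists_subfield [CharZero K] [Algebra.IsIntegral ℚ K] :
    IsCMField K ↔ ∃ F : Subfield K,
      (∀ φ : F →+* ℂ, ComplexEmbedding.IsReal φ) ∧
      (∀ ψ : K →+* ℂ, ¬ ComplexEmbedding.IsReal ψ) ∧
      Module.finrank F K = 2 := by
  simp only [← isTotallyReal_iff_forall_isReal, ← isTotallyComplex_iff_forall_not_isReal]
  constructor
  · intro _
    exact ⟨maximalRealSubfield K, inferInstance, inferInstance,
      Algebra.IsQuadraticExtension.finrank_eq_two _ K⟩
  · rintro ⟨F, _, _, hF⟩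
    have : Algebra.IsQuadraticExtension F K := ⟨hF⟩
    exact IsCMField.ofCMExtension F K

variable [NumberField K]

theorem isolator_unitsInSubfield_maximalRealSubfield [IsCMField K] :
    isolator (unitsInSubfield (maximalRealSubfield K)) = ⊤ := by
  refine isolator_eq_top_iff.2 fun u ↦
    ⟨Units.torsionOrder K, Units.torsionOrder_pos K, ?_⟩
  have hreal : u ^ Units.torsionOrder K ∈ IsCMField.realUnits K := by
    rw [← IsCMField.unitsMulComplexConjInv_ker, MonoidHom.mem_ker, map_pow]
    exact pow_card_eq_one'
  obtain ⟨v, hv⟩ := (IsCMField.mem_realUnits_iff K _).1 hreal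
  rw [mem_unitsInSubfield_iff, ← hv]
  exact (v : maximalRealSubfield K).2

theorem isCMField_iff_exists_isolator_unitsInSubfield_eq_top :
    IsCMField K ↔ ∃ F : Subfield K, F ≠ ⊤ ∧ isolator (unitsInSubfield F) = ⊤ := by
  constructor
  · intro _
    refine ⟨maximalRealSubfield K, fun htop ↦ ?_, isolator_unitsInSubfield_maximalRealSubfield⟩
    have := Algebra.IsQuadraticExtension.finrank_eq_two (maximalRealSubfield K) K
    have := finrank_subfield_eq_one_iff.2 htop
    omega
  · rintro ⟨F, hF, htop⟩
    exact isCMField_of_comap_injective F (finrank_subfield_eq_one_iff.not.2 hF)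
      (comap_injective_of_isolator_unitsInSubfield_eq_top htop)

end CMField

/-- There exists a unit `u ∈ 𝓞_K^*` with `K = ℚ(u^k)` for every positive integer `k`
if and only if `K` is not a CM field (a totally imaginary quadratic extension of a
totally real subfield). -/
theorem stmt_11 (K : Type*) [Field K] [NumberField K] :
    (∃ u : (𝓞 K)ˣ, ∀ k : ℕ, 0 < k →
        Subfield.closure {algebraMap (𝓞 K) K ((u : 𝓞 K) ^ k)} = (⊤ : Subfield K)) ↔
      ¬ ∃ F : Subfield K,
          (∀ φ : F →+* ℂ, NumberField.ComplexEmbedding.IsReal φ) ∧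
          (∀ ψ : K →+* ℂ, ¬ NumberField.ComplexEmbedding.IsReal ψ) ∧
          Module.finrank F K = 2 := by
  rw [exists_unit_forall_pow_closure_eq_top_iff, ← isCMField_iff_exists_subfield,
    isCMField_iff_exists_isolator_unitsInSubfield_eq_top]
  simp only [not_exists, not_and, ne_eq]
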